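/- Let x, y, z ∈ ℂ with xyz ≠ 0, xy ≠ z, and xy ≠ −z, and let f be the binary constraint (1, x, y, z). Define u = [1, −1/(xz)] and g(x_1,x_2) = Σ_{x_3 ∈ {0,1}} f(x_1,x_3)·f(x_3,x_2)·f(x_2,x_3)·u(x_3). Then g equals the binary constraint (1 − xy/z, xy − z, 0, (x²y² − z²)/x); in particular g(1,0) = 0 while g(0,0), g(0,1), and g(1,1) are all nonzero, and g is T-constructible from {f, u}. -/

import Mathlib

/-- A (complex-valued Boolean) constraint of arity `k`. -/
abbrev Constraint (k : ℕ) : Type := (Fin k → Bool) → ℂ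

/-- The binary equality constraint `EQ = [1,0,1]`, as a two-argument function. -/
def EQc : Bool → Bool → ℂ := fun a b => if a = b then 1 else 0

/-- The binary disequality constraint `XOR = [0,1,0]`, as a two-argument function. -/
def XORc : Bool → Bool → ℂ := fun a b => if a = b then 0 else 1

/-- The binary constraint `Implies = (1,1,0,1)`, as a two-argument function. -/
def IMPc : Bool → Bool → ℂ := fun a b => if a = true ∧ b = false then 0 else 1

/-- The unary constraint `[a, b]` (value `a` on input `0`, value `b` on input `1`). -/
def unC (a b : ℂ) : Constraint 1 := fun x => if x 0 then b else a

/-- The binary constraint `(a,b,c,d) = (f(0,0), f(0,1), f(1,0), f(1,1))`. -/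
def binC (a b c d : ℂ) : Constraint 2 := fun x =>
  if x 0 then (if x 1 then d else c) else (if x 1 then b else a)

/-- `OR = [0,1,1]`. -/
def ORc : Constraint 2 := binC 0 1 1 1

/-- `Implies = (1,1,0,1)` as a binary constraint. -/
def Impliesc : Constraint 2 := binC 1 1 0 1

/-- Membership in `NZ`: the constraint is everywhere nonzero. -/
def inNZ {k : ℕ} (f : Constraint k) : Prop := ∀ x, f x ≠ 0

/-- Membership in `DG`: the constraint is a product of unary constraints, one per variable. -/
def inDG {k : ℕ} (f : Constraint k) : Prop :=
  ∃ g : Fin k → Bool → ℂ, ∀ x, f x = ∏ i, g i (x i)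

/-- Membership in `ED`: the constraint is a product of at least one factor, each factor
being a unary constraint applied to some variable, or `EQ`/`XOR` applied to two variables. -/
def inED {k : ℕ} (f : Constraint k) : Prop :=
  ∃ (l1 l2 : ℕ) (h : Fin l1 → Bool → ℂ) (j : Fin l1 → Fin k)
    (g : Fin l2 → Bool → Bool → ℂ) (m n : Fin l2 → Fin k),
    1 ≤ l1 + l2 ∧ (∀ i, g i = EQc ∨ g i = XORc) ∧
    ∀ x, f x = (∏ i, h i (x (j i))) * ∏ i, g i (x (m i)) (x (n i))

/-- Membership in `IM`: `f ∉ NZ` and `f` is a product of at least one factor, each factor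
being a unary constraint applied to some variable, or `Implies` applied to two variables. -/
def inIM {k : ℕ} (f : Constraint k) : Prop :=
  ¬ inNZ f ∧
  ∃ (l1 l2 : ℕ) (h : Fin l1 → Bool → ℂ) (j : Fin l1 → Fin k)
    (m n : Fin l2 → Fin k),
    1 ≤ l1 + l2 ∧
    ∀ x, f x = (∏ i, h i (x (j i))) * ∏ i, IMPc (x (m i)) (x (n i))

/-- The underlying relation `R_f = {x : f x ≠ 0}` of a constraint `f`. -/
def relOf {k : ℕ} (f : Constraint k) : Set (Fin k → Bool) := {x | f x ≠ 0}

/-- Factors allowed in an IMP-style factorization of a relation: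
`Δ_c(x_i)` or `Implies(x_i, x_j)`. -/
inductive ImpFactor (k : ℕ) where
  | delta (c : Bool) (i : Fin k)
  | imp (i j : Fin k)
deriving DecidableEq

/-- Evaluation of an IMP-factor at an assignment. -/
def ImpFactor.eval {k : ℕ} : ImpFactor k → (Fin k → Bool) → Bool
  | .delta c i, x => x i == c
  | .imp i j, x => !(x i) || x j

/-- `L` is a factor list for the relation `R`: the conjunction of the factors in `L` equals `R`. -/
def isFactorListFor {k : ℕ} (L : List (ImpFactor k)) (R : Set (Fin k → Bool)) : Prop :=
  ∀ x, x ∈ R ↔ ∀ fac ∈ L, fac.eval x = true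

/-- Membership in `IMP`: the relation is the conjunction of a positive number of factors of the
forms `Δ_0(x)`, `Δ_1(x)`, `Implies(x,y)`. -/
def inIMP {k : ℕ} (R : Set (Fin k → Bool)) : Prop :=
  ∃ L : List (ImpFactor k), L ≠ [] ∧ isFactorListFor L R

/-- `f` has imp support when `R_f ∈ IMP`. -/
def hasImpSupport {k : ℕ} (f : Constraint k) : Prop := inIMP (relOf f)

/-- A factor list is imp-distinctive if no variable occurs both in a `Δ_c` factor and in an
`Implies` factor, and no factor `Implies(x,x)` occurs. -/
def impDistinctive {k : ℕ} (L : List (ImpFactor k)) : Prop :=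
  (∀ i : Fin k, ¬ ((∃ c, ImpFactor.delta c i ∈ L) ∧
      (∃ j, ImpFactor.imp i j ∈ L ∨ ImpFactor.imp j i ∈ L))) ∧
  (∀ i : Fin k, ImpFactor.imp i i ∉ L)

/-- Factors of the forms `Δ_c(x_i)` or `EQ(x_i,x_j)`. -/
inductive EqFactor (k : ℕ) where
  | delta (c : Bool) (i : Fin k)
  | eq (i j : Fin k)
deriving DecidableEq

/-- Evaluation of such a factor at an assignment. -/
def EqFactor.eval {k : ℕ} : EqFactor k → (Fin k → Bool) → Bool
  | .delta c i, x => x i == c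
  | .eq i j, x => x i == x j

/-- `f` is in simple form: its representing Boolean matrix (rows indexed by `R_f`) has
no all-`0` column, no all-`1` column, and no two identical columns. -/
def simpleForm {k : ℕ} (f : Constraint k) : Prop :=
  (∀ i : Fin k, ∃ a, f a ≠ 0 ∧ a i = true) ∧
  (∀ i : Fin k, ∃ a, f a ≠ 0 ∧ a i = false) ∧
  (∀ i j : Fin k, i ≠ j → ∃ a, f a ≠ 0 ∧ a i ≠ a j)

/-- A constraint of unspecified arity. -/
abbrev Ctr : Type := Σ k : ℕ, Constraint k

/-- T-constructibility of a constraint from a set `G` of constraints, by finitely many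
applications of permutation, pinning, projection, linking, expansion, multiplication,
and normalization. -/
inductive TCon (G : Set Ctr) : Ctr → Prop where
  | base {c : Ctr} : c ∈ G → TCon G c
  | perm {k : ℕ} {g : Constraint k} (σ : Equiv.Perm (Fin k)) :
      TCon G ⟨k, g⟩ → TCon G ⟨k, fun x => g (fun i => x (σ i))⟩
  | pinning {k : ℕ} {g : Constraint (k+1)} (i : Fin (k+1)) (c : Bool) :
      TCon G ⟨k+1, g⟩ → TCon G ⟨k, fun x => g (i.insertNth c x)⟩
  | proj {k : ℕ} {g : Constraint (k+1)} (i : Fin (k+1)) :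
      TCon G ⟨k+1, g⟩ →
      TCon G ⟨k, fun x => g (i.insertNth false x) + g (i.insertNth true x)⟩
  | link {k : ℕ} {g : Constraint (k+1)} (i : Fin (k+1)) (j : Fin k) :
      TCon G ⟨k+1, g⟩ → TCon G ⟨k, fun x => g (i.insertNth (x j) x)⟩
  | expand {k : ℕ} {g : Constraint k} (i : Fin (k+1)) :
      TCon G ⟨k, g⟩ → TCon G ⟨k+1, fun x => g (fun j => x (i.succAbove j))⟩
  | mul {k : ℕ} {g₁ g₂ : Constraint k} :
      TCon G ⟨k, g₁⟩ → TCon G ⟨k, g₂⟩ → TCon G ⟨k, fun x => g₁ x * g₂ x⟩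
  | norm {k : ℕ} {g : Constraint k} (lam : ℂ) (hlam : lam ≠ 0) :
      TCon G ⟨k, g⟩ → TCon G ⟨k, fun x => lam * g x⟩

/-- T-constructibility using no projection operation. -/
inductive TConNoProj (G : Set Ctr) : Ctr → Prop where
  | base {c : Ctr} : c ∈ G → TConNoProj G c
  | perm {k : ℕ} {g : Constraint k} (σ : Equiv.Perm (Fin k)) :
      TConNoProj G ⟨k, g⟩ → TConNoProj G ⟨k, fun x => g (fun i => x (σ i))⟩
  | pinning {k : ℕ} {g : Constraint (k+1)} (i : Fin (k+1)) (c : Bool) :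
      TConNoProj G ⟨k+1, g⟩ → TConNoProj G ⟨k, fun x => g (i.insertNth c x)⟩
  | link {k : ℕ} {g : Constraint (k+1)} (i : Fin (k+1)) (j : Fin k) :
      TConNoProj G ⟨k+1, g⟩ → TConNoProj G ⟨k, fun x => g (i.insertNth (x j) x)⟩
  | expand {k : ℕ} {g : Constraint k} (i : Fin (k+1)) :
      TConNoProj G ⟨k, g⟩ → TConNoProj G ⟨k+1, fun x => g (fun j => x (i.succAbove j))⟩
  | mul {k : ℕ} {g₁ g₂ : Constraint k} :
      TConNoProj G ⟨k, g₁⟩ → TConNoProj G ⟨k, g₂⟩ →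
      TConNoProj G ⟨k, fun x => g₁ x * g₂ x⟩
  | norm {k : ℕ} {g : Constraint k} (lam : ℂ) (hlam : lam ≠ 0) :
      TConNoProj G ⟨k, g⟩ → TConNoProj G ⟨k, fun x => lam * g x⟩

/-- Pinning the `i`-th variable of `f` to the bit `c`. -/
def pinC {k : ℕ} (f : Constraint (k+1)) (i : Fin (k+1)) (c : Bool) : Constraint k :=
  fun x => f (i.insertNth c x)

/-- `R_f` admits a good factor list: a factor list consisting only of `Implies` factors,
in which every variable is incident to at least one edge of the induced imp graph,
and whose imp graph has no (directed) cycle. -/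
def hasGoodFactorList {k : ℕ} (f : Constraint k) : Prop :=
  ∃ L : List (ImpFactor k),
    isFactorListFor L (relOf f) ∧
    (∀ fac ∈ L, ∃ i j, fac = ImpFactor.imp i j) ∧
    (∀ i : Fin k, ∃ j, ImpFactor.imp i j ∈ L ∨ ImpFactor.imp j i ∈ L) ∧
    ¬ ∃ i : Fin k, Relation.TransGen (fun a b => ImpFactor.imp a b ∈ L) i i

/-!
The gadget `g` evaluates on `(1, 0)` to `y + xyz · u(1)`, so `u(1) = -1/(xz)` is exactly the weight
for which the two summands cancel there. The other three entries are then products of `xy - z`,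
`xy + z` and powers of `x` and `z`, up to sign. For constructibility, expansion and linking together
substitute an arbitrary choice of variables into a constraint, so each factor of the summand can be
written over `(x₁, x₂, x₃)`; it remains to multiply the factors and to project `x₃` away.
-/

namespace TCon

variable {G : Set Ctr} {k m : ℕ}

theorem comp_equiv {g : Constraint k} (hg : TCon G ⟨k, g⟩) (e : Fin k ≃ Fin m) :
    TCon G ⟨m, fun x => g (x ∘ e)⟩ := by
  obtain rfl : k = m := Fin.equiv_iff_eq.mp ⟨e⟩
  exact perm e hg

theorem comp_castAdd {g : Constraint k} (hg : TCon G ⟨k, g⟩) (m : ℕ) :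
    TCon G ⟨k + m, fun x => g (x ∘ Fin.castAdd m)⟩ := by
  induction m with
  | zero => exact hg
  | succ m ih =>
    have expanded := expand (Fin.last (k + m)) ih
    simp only [Fin.succAbove_last] at expanded
    exact expanded

theorem comp_append {g : Constraint (m + k)} (hg : TCon G ⟨m + k, g⟩) (σ : Fin k → Fin m) :
    TCon G ⟨m, fun x => g (Fin.append x (x ∘ σ))⟩ := by
  induction k with
  | zero =>
    simp only [Fin.append_right_nil _ _ rfl, Fin.cast_refl, Function.comp_id]
    exact hg
  | succ k ih =>
    have linked := link (Fin.last (m + k)) (Fin.castAdd k (σ (Fin.last k))) hg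
    have append_eq (x : Fin m → Bool) :
        Fin.snoc (α := fun _ => Bool) (Fin.append x (x ∘ σ ∘ Fin.castSucc)) (x (σ (Fin.last k))) =
          Fin.append x (x ∘ σ) := by
      rw [← Fin.append_snoc]
      congr 1
      exact Fin.snoc_init_self (x ∘ σ)
    simpa only [Fin.insertNth_last', Fin.append_left, append_eq] using ih linked (σ ∘ Fin.castSucc)

theorem comp {g : Constraint k} (hg : TCon G ⟨k, g⟩) (σ : Fin k → Fin m) :
    TCon G ⟨m, fun x => g (x ∘ σ)⟩ := by
  have appended := ((hg.comp_castAdd m).comp_equiv finAddFlip).comp_append σ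
  have append_eq (x : Fin m → Bool) :
      (Fin.append x (x ∘ σ) ∘ finAddFlip) ∘ Fin.castAdd m = x ∘ σ := by
    funext i
    simp only [Function.comp_apply, finAddFlip_apply_castAdd, Fin.append_right]
  simpa only [append_eq] using appended

theorem sum_snoc {g : Constraint (k + 1)} (hg : TCon G ⟨k + 1, g⟩) :
    TCon G ⟨k, fun x => ∑ b, g (Fin.snoc x b)⟩ := by
  simpa only [Fintype.sum_bool, Fin.insertNth_last', add_comm] using proj (Fin.last k) hg

end TCon

/-- The binary constraint `∑ x₃, f(x₁, x₃) · f(x₃, x₂) · f(x₂, x₃) · u(x₃)`: an `f`-edge from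
`x₁` to a hidden vertex `x₃` of weight `u`, which is joined to `x₂` by `f`-edges both ways.
It is the construction that sends `f` and `u` to `g` in `stmt9`. -/
def digonGadget (f : Constraint 2) (u : Constraint 1) : Constraint 2 :=
  fun v => ∑ b, f ![v 0, b] * f ![b, v 1] * f ![v 1, b] * u ![b]

theorem TCon.digonGadget {G : Set Ctr} {f : Constraint 2} {u : Constraint 1}
    (hf : TCon G ⟨2, f⟩) (hu : TCon G ⟨1, u⟩) : TCon G ⟨2, digonGadget f u⟩ := by
  have summand := (((hf.comp ![0, 2]).mul (hf.comp ![2, 1])).mul (hf.comp ![1, 2])).mul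
    (hu.comp ![(2 : Fin 3)])
  convert summand.sum_snoc using 2
  funext v
  -- Unlike `∘`, `FinVec.map` computes on vector literals.
  simp only [← FinVec.map_eq]
  rfl

theorem digonGadget_binC_unC (a b c d p q : ℂ) :
    digonGadget (binC a b c d) (unC p q) =
      binC (a ^ 3 * p + b ^ 2 * c * q) (a * b * c * p + b * d ^ 2 * q)
        (a ^ 2 * c * p + b * c * d * q) (b * c ^ 2 * p + d ^ 3 * q) := by
  funext v
  cases h0 : v 0 <;> cases h1 : v 1 <;>
    simp only [digonGadget, binC, unC, h0, h1, Fintype.sum_bool, Matrix.cons_val_zero,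
      Matrix.cons_val_one, Bool.false_eq_true, if_true, if_false] <;>
    ring

theorem digonGadget_eq_binC {x z : ℂ} (hx : x ≠ 0) (hz : z ≠ 0) (y : ℂ) :
    digonGadget (binC 1 x y z) (unC 1 (-(1 / (x * z)))) =
      binC (1 - x * y / z) (x * y - z) 0 ((x ^ 2 * y ^ 2 - z ^ 2) / x) := by
  rw [digonGadget_binC_unC]
  congr 1 <;> field_simp <;> ring

/-- For `x, y, z ∈ ℂ` with `xyz ≠ 0`, `xy ≠ z`, `xy ≠ -z`, `f = (1,x,y,z)`,
`u = [1, -1/(xz)]`, and `g(x₁,x₂) = Σ_{x₃∈{0,1}} f(x₁,x₃)·f(x₃,x₂)·f(x₂,x₃)·u(x₃)`: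
`g = (1 - xy/z, xy - z, 0, (x²y² - z²)/x)`; in particular `g(1,0) = 0` while `g(0,0)`,
`g(0,1)`, `g(1,1)` are all nonzero, and `g` is T-constructible from `{f, u}`. -/
theorem stmt9 (x y z : ℂ) (hnz : x * y * z ≠ 0) (h1 : x * y ≠ z) (h2 : x * y ≠ -z)
    (f : Constraint 2) (hf : f = binC 1 x y z)
    (u : Constraint 1) (hu : u = unC 1 (-(1 / (x * z))))
    (g : Constraint 2)
    (hg : ∀ v : Fin 2 → Bool,
      g v = f ![v 0, false] * f ![false, v 1] * f ![v 1, false] * u ![false]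
          + f ![v 0, true] * f ![true, v 1] * f ![v 1, true] * u ![true]) :
    (∀ v, g v = binC (1 - x * y / z) (x * y - z) 0 ((x ^ 2 * y ^ 2 - z ^ 2) / x) v) ∧
    g ![true, false] = 0 ∧
    g ![false, false] ≠ 0 ∧ g ![false, true] ≠ 0 ∧ g ![true, true] ≠ 0 ∧
    TCon ({⟨2, f⟩, ⟨1, u⟩} : Set Ctr) ⟨2, g⟩ := by
  obtain ⟨⟨hx, -⟩, hz⟩ : (x ≠ 0 ∧ y ≠ 0) ∧ z ≠ 0 := by simpa only [mul_ne_zero_iff] using hnz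
  have hsub : x * y - z ≠ 0 := sub_ne_zero.mpr h1
  have hadd : x * y + z ≠ 0 := mt eq_neg_of_add_eq_zero_left h2
  have g_eq : g = digonGadget f u := by
    funext v
    rw [hg, digonGadget, Fintype.sum_bool, add_comm]
  have values : g = binC (1 - x * y / z) (x * y - z) 0 ((x ^ 2 * y ^ 2 - z ^ 2) / x) := by
    rw [g_eq, hf, hu, digonGadget_eq_binC hx hz]
  have h00 : 1 - x * y / z ≠ 0 := by
    rw [one_sub_div hz]
    exact div_ne_zero (sub_ne_zero.mpr h1.symm) hz
  have h11 : (x ^ 2 * y ^ 2 - z ^ 2) / x ≠ 0 := by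
    rw [← mul_pow, sq_sub_sq]
    exact div_ne_zero (mul_ne_zero hadd hsub) hx
  refine ⟨congrFun values, ?_, ?_, ?_, ?_, ?_⟩
  · simp [values, binC]
  · simpa [values, binC] using h00
  · simpa [values, binC] using hsub
  · simpa [values, binC] using h11
  · rw [g_eq]
    exact .digonGadget (.base (by simp)) (.base (by simp))
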